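/- Bernstein theorem for graphical self-shrinkers: if u: ℝⁿ → ℝ is a smooth entire solution of div(Du/√(1+|Du|²)) = (x·Du − u)/(2√(1+|Du|²)), then u(x) = a₁x₁ + ⋯ + aₙxₙ for some constants a₁,…,aₙ ∈ ℝ. In particular, the graph of u is a hyperplane through the origin. -/

import Mathlib

open Real MeasureTheory Metric Filter
open scoped RealInnerProductSpace ENNReal NNReal

noncomputable section

abbrev E (n : ℕ) : Type := EuclideanSpace ℝ (Fin n)

variable {n : ℕ}

/-- `√(1 + |Du|²)`, the area element of the graph of `u`. -/
def aEl (u : E n → ℝ) (x : E n) : ℝ := Real.sqrt (1 + ‖gradient u x‖ ^ 2)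

/-- The vector field `Du/√(1+|Du|²)`. -/
def Vfield (u : E n → ℝ) (x : E n) : E n := (aEl u x)⁻¹ • gradient u x

/-- `div (Du/√(1+|Du|²))`. -/
def divV (u : E n → ℝ) (x : E n) : ℝ :=
  ∑ i, fderiv ℝ (fun y => Vfield u y i) x (EuclideanSpace.single i 1)

/-- The self-shrinker equation for an entire graph. -/
def ShrinkerEq (u : E n → ℝ) : Prop :=
  ∀ x, divV u x = (⟪x, gradient u x⟫ - u x) / (2 * aEl u x)

/-- The mean curvature of the graph of `u` with respect to the upward unit normal. -/
def meanCurv (u : E n → ℝ) (x : E n) : ℝ := -divV u x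

/-- The position vector `X = (x, u x)` of a point of the graph. -/
def Pos (u : E n → ℝ) (x : E n) : E (n + 1) :=
  (WithLp.equiv 2 (Fin (n + 1) → ℝ)).symm (Fin.snoc ((WithLp.equiv 2 (Fin n → ℝ)) x) (u x))

/-- The upward unit normal `n = (-Du, 1)/√(1+|Du|²)` at the point of the graph over `x`. -/
def NmlAt (u : E n → ℝ) (x : E n) : E (n + 1) :=
  (WithLp.equiv 2 (Fin (n + 1) → ℝ)).symm
    (Fin.snoc (fun i => -(Vfield u x i)) ((aEl u x)⁻¹))

/-- Projection of `ℝ^{n+1}` onto the first `n` coordinates. -/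
def projE (p : E (n + 1)) : E n :=
  (WithLp.equiv 2 (Fin n → ℝ)).symm fun i => p i.castSucc

/-- The unit normal of the graph, extended to `ℝ^{n+1}` independently of the last coordinate. -/
def Nml (u : E n → ℝ) (p : E (n + 1)) : E (n + 1) := NmlAt u (projE p)

/-- The inverse induced metric `g^{ij} = δ_{ij} - u_i u_j/(1+|Du|²)` of the graph. -/
def ginv (u : E n → ℝ) (x : E n) (i j : Fin n) : ℝ :=
  (if i = j then 1 else 0) - gradient u x i * gradient u x j / (aEl u x) ^ 2

/-- The Hessian `u_{ij}` of `u`. -/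
def hess (u : E n → ℝ) (x : E n) (i j : Fin n) : ℝ :=
  fderiv ℝ (fun y => gradient u y j) x (EuclideanSpace.single i 1)

/-- `|A|²`, the squared norm of the second fundamental form of the graph of `u`:
`|A|² = g^{ik} g^{jl} h_{ij} h_{kl}` with `h_{ij} = u_{ij}/√(1+|Du|²)`. -/
def A2 (u : E n → ℝ) (x : E n) : ℝ :=
  (∑ i, ∑ j, ∑ k, ∑ l, ginv u x i k * ginv u x j l * hess u x i j * hess u x k l) /
    (aEl u x) ^ 2

/-- Coordinate components `g^{ij} ∂_j f` of the tangential gradient. -/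
def gradCoord (u f : E n → ℝ) (x : E n) (i : Fin n) : ℝ :=
  ∑ j, ginv u x i j * gradient f x j

/-- The tangential gradient `∇_Σ f` (for `f` defined on the base, pulled back to the graph),
as a vector in `ℝ^{n+1}`. -/
def gradSigma (u f : E n → ℝ) (x : E n) : E (n + 1) :=
  (WithLp.equiv 2 (Fin (n + 1) → ℝ)).symm
    (Fin.snoc (fun i => gradCoord u f x i) (∑ i, gradient u x i * gradCoord u f x i))

/-- The Laplace–Beltrami operator of the graph:
`Δ_Σ f = (1/√g) ∂_i (√g g^{ij} ∂_j f)`. -/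
def lapSigma (u f : E n → ℝ) (x : E n) : ℝ :=
  (aEl u x)⁻¹ *
    ∑ i, fderiv ℝ (fun y => aEl u y * gradCoord u f y i) x (EuclideanSpace.single i 1)

/-- The tangential gradient `∇_Σ η` of an ambient function `η : ℝ^{n+1} → ℝ` along the graph:
the ambient gradient minus its normal component. -/
def gradSigmaAmb (u : E n → ℝ) (η : E (n + 1) → ℝ) (x : E n) : E (n + 1) :=
  gradient η (Pos u x) - ⟪gradient η (Pos u x), NmlAt u x⟫ • NmlAt u x

/-- `Vol(Σ ∩ B_R)`: the area of the part of the graph inside the ball of radius `R`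
in `ℝ^{n+1}`, computed by the area formula. -/
def sVol (u : E n → ℝ) (R : ℝ) : ℝ := ∫ x in {x : E n | ‖Pos u x‖ ≤ R}, aEl u x

/-- `M_R = sup_{|x| ≤ R} |u|`. -/
def supBall (u : E n → ℝ) (R : ℝ) : ℝ := ⨆ x : Metric.closedBall (0 : E n) R, |u x.1|

end

open scoped ContDiff

section PartialDerivatives

variable {n : ℕ}

/-- The `i`-th partial derivative of `f`. -/
noncomputable def pd (i : Fin n) (f : E n → ℝ) (x : E n) : ℝ :=
  fderiv ℝ f x (EuclideanSpace.single i 1)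

lemma ContDiff.pd {f : E n → ℝ} (hf : ContDiff ℝ ∞ f) (i : Fin n) : ContDiff ℝ ∞ (pd i f) :=
  (hf.fderiv_right (m := ∞) (by simp)).clm_apply contDiff_const

lemma continuous_pd {f : E n → ℝ} (hf : ContDiff ℝ 1 f) (i : Fin n) : Continuous (pd i f) :=
  (hf.continuous_fderiv (by simp)).clm_apply continuous_const

lemma ContDiff.differentiableAt_of_smooth {f : E n → ℝ} (hf : ContDiff ℝ ∞ f) (x : E n) :
    DifferentiableAt ℝ f x :=
  hf.contDiffAt.differentiableAt (by simp)

lemma pd_mul (i : Fin n) {f g : E n → ℝ} {x : E n} (hf : DifferentiableAt ℝ f x)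
    (hg : DifferentiableAt ℝ g x) :
    pd i (fun y => f y * g y) x = pd i f x * g x + f x * pd i g x := by
  unfold pd
  rw [fderiv_fun_mul hf hg]
  simp
  ring

lemma pd_add (i : Fin n) {f g : E n → ℝ} {x : E n} (hf : DifferentiableAt ℝ f x)
    (hg : DifferentiableAt ℝ g x) :
    pd i (fun y => f y + g y) x = pd i f x + pd i g x := by
  unfold pd
  rw [fderiv_fun_add hf hg]
  simp

lemma pd_sub (i : Fin n) {f g : E n → ℝ} {x : E n} (hf : DifferentiableAt ℝ f x)
    (hg : DifferentiableAt ℝ g x) :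
    pd i (fun y => f y - g y) x = pd i f x - pd i g x := by
  unfold pd
  rw [fderiv_fun_sub hf hg]
  simp

lemma pd_sum {ι : Type*} (s : Finset ι) (i : Fin n) {f : ι → E n → ℝ} {x : E n}
    (hf : ∀ j ∈ s, DifferentiableAt ℝ (f j) x) :
    pd i (fun y => ∑ j ∈ s, f j y) x = ∑ j ∈ s, pd i (f j) x := by
  unfold pd
  rw [fderiv_fun_sum hf]
  simp

lemma pd_const (i : Fin n) (c : ℝ) (x : E n) : pd i (fun _ => c) x = 0 := by
  simp [pd]

lemma pd_comp (i : Fin n) {g : ℝ → ℝ} {g' : ℝ} {f : E n → ℝ} {x : E n}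
    (hg : HasDerivAt g g' (f x)) (hf : DifferentiableAt ℝ f x) :
    pd i (fun y => g (f y)) x = g' * pd i f x := by
  unfold pd
  have h := (hg.comp_hasFDerivAt x hf.hasFDerivAt).fderiv
  rw [show (fun y => g (f y)) = g ∘ f from rfl, h]
  simp

lemma contDiff_coord (j : Fin n) : ContDiff ℝ ∞ (fun y : E n => y j) :=
  contDiff_piLp_apply 2

lemma pd_coord (i j : Fin n) (x : E n) : pd i (fun y => y j) x = if i = j then 1 else 0 := by
  have h : HasFDerivAt (fun y : E n => y j) (EuclideanSpace.proj (𝕜 := ℝ) j : E n →L[ℝ] ℝ) x :=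
    (EuclideanSpace.proj (𝕜 := ℝ) j : E n →L[ℝ] ℝ).hasFDerivAt
  unfold pd
  rw [h.fderiv]
  simp [eq_comm]

/-- Schwarz's theorem. -/
lemma pd_comm {f : E n → ℝ} (hf : ContDiff ℝ ∞ f) (i j : Fin n) (x : E n) :
    pd i (pd j f) x = pd j (pd i f) x := by
  have hd : DifferentiableAt ℝ (fderiv ℝ f) x :=
    (hf.fderiv_right (m := ∞) (by simp)).contDiffAt.differentiableAt (by simp)
  have key : ∀ v w : E n, fderiv ℝ (fun y => fderiv ℝ f y v) x w = fderiv ℝ (fderiv ℝ f) x w v := by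
    intro v w
    rw [fderiv_clm_apply hd (differentiableAt_const v)]
    simp
  have hs : IsSymmSndFDerivAt ℝ f x :=
    hf.contDiffAt.isSymmSndFDerivAt
      (by simpa using WithTop.coe_le_coe.2 (le_top : (2 : ℕ∞) ≤ ⊤))
  unfold pd
  rw [key, key]
  exact hs _ _

lemma pd_sum_coord_mul (i : Fin n) {F : Fin n → E n → ℝ} {x : E n}
    (hF : ∀ j, DifferentiableAt ℝ (F j) x) :
    pd i (fun y => ∑ j, y j * F j y) x = F i x + ∑ j, x j * pd i (F j) x := by
  have hc : ∀ j : Fin n, DifferentiableAt ℝ (fun y : E n => y j) x := fun j =>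
    (contDiff_coord j).differentiableAt_of_smooth x
  rw [pd_sum _ _ fun j _ => (hc j).fun_mul (hF j)]
  simp [pd_mul i (hc _) (hF _), pd_coord, Finset.sum_add_distrib]

lemma pd_sum_sq (i : Fin n) {F : Fin n → E n → ℝ} {x : E n}
    (hF : ∀ j, DifferentiableAt ℝ (F j) x) :
    pd i (fun y => ∑ j, F j y ^ 2) x = 2 * ∑ j, F j x * pd i (F j) x := by
  simp only [sq]
  rw [pd_sum _ _ fun j _ => (hF j).fun_mul (hF j), Finset.mul_sum]
  refine Finset.sum_congr rfl fun j _ => ?_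
  rw [pd_mul i (hF j) (hF j)]
  ring

lemma fderiv_eq_zero_of_pd {f : E n → ℝ} {x : E n} (h : ∀ i, pd i f x = 0) :
    fderiv ℝ f x = 0 := by
  have : (fderiv ℝ f x : E n →ₗ[ℝ] ℝ) = 0 := by
    refine (EuclideanSpace.basisFun (Fin n) ℝ).toBasis.ext fun i => ?_
    simpa [pd] using h i
  ext v
  exact congrArg (fun L : E n →ₗ[ℝ] ℝ => L v) this

lemma gradient_apply {f : E n → ℝ} (x : E n) (i : Fin n) : gradient f x i = pd i f x := by
  rw [pd, ← inner_gradient_left, EuclideanSpace.inner_single_right]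
  simp

/-- The divergence theorem for a vector field paired with a compactly supported function. -/
lemma integral_mul_sum_pd {φ : E n → ℝ} {F : Fin n → E n → ℝ} (hφ : ContDiff ℝ 1 φ)
    (hc : HasCompactSupport φ) (hF : ∀ i, ContDiff ℝ 1 (F i)) :
    ∫ x, φ x * ∑ i, pd i (F i) x = -∫ x, ∑ i, pd i φ x * F i x := by
  have hc' : ∀ i, HasCompactSupport (pd i φ) := fun i =>
    (hc.fderiv (𝕜 := ℝ)).comp_left (g := fun L : E n →L[ℝ] ℝ => L (EuclideanSpace.single i 1))
      (by simp)
  have h1 : ∀ i, Integrable (fun x => pd i φ x * F i x) := fun i =>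
    ((continuous_pd hφ i).mul (hF i).continuous).integrable_of_hasCompactSupport (hc' i).mul_right
  have h2 : ∀ i, Integrable (fun x => φ x * pd i (F i) x) := fun i =>
    (hφ.continuous.mul (continuous_pd (hF i) i)).integrable_of_hasCompactSupport hc.mul_right
  have h3 : ∀ i, Integrable (fun x => φ x * F i x) := fun i =>
    (hφ.continuous.mul (hF i).continuous).integrable_of_hasCompactSupport hc.mul_right
  simp only [Finset.mul_sum]
  rw [integral_finsetSum _ fun i _ => h2 i, integral_finsetSum _ fun i _ => h1 i,
    ← Finset.sum_neg_distrib]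
  refine Finset.sum_congr rfl fun i _ => ?_
  exact integral_mul_fderiv_eq_neg_fderiv_mul_of_integrable (h1 i) (h2 i) (h3 i)
    (fun x _ => hφ.differentiable (by simp) x) (fun x _ => (hF i).differentiable (by simp) x)

end PartialDerivatives

section Cutoff

lemma hasDerivAt_max_zero_sq (t : ℝ) :
    HasDerivAt (fun s : ℝ => max s 0 ^ 2) (2 * max t 0) t := by
  rcases lt_trichotomy t 0 with h | rfl | h
  · have : (fun s : ℝ => max s 0 ^ 2) =ᶠ[nhds t] fun _ => 0 := by
      filter_upwards [gt_mem_nhds h] with s hs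
      simp [max_eq_right hs.le]
    simpa [max_eq_right h.le] using (hasDerivAt_const t (0 : ℝ)).congr_of_eventuallyEq this
  · rw [hasDerivAt_iff_isLittleO]
    refine Asymptotics.IsBigO.trans_isLittleO (g := fun s : ℝ => s ^ 2) ?_ ?_
    · refine Asymptotics.IsBigO.of_bound 1 (Eventually.of_forall fun s => ?_)
      rcases le_total s 0 with h | h <;> simp [h, sq_nonneg]
    · simpa using Asymptotics.isLittleO_pow_id (𝕜 := ℝ) (n := 2) (by norm_num)
  · have : (fun s : ℝ => max s 0 ^ 2) =ᶠ[nhds t] fun s => s ^ 2 := by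
      filter_upwards [lt_mem_nhds h] with s hs
      simp [max_eq_left hs.le]
    simpa [max_eq_left h.le] using (hasDerivAt_pow 2 t).congr_of_eventuallyEq this

lemma contDiff_max_zero_sq : ContDiff ℝ 1 (fun s : ℝ => max s 0 ^ 2) := by
  rw [contDiff_one_iff_deriv]
  refine ⟨fun t => (hasDerivAt_max_zero_sq t).differentiableAt, ?_⟩
  rw [show deriv (fun s : ℝ => max s 0 ^ 2) = fun t => 2 * max t 0 from
    funext fun t => (hasDerivAt_max_zero_sq t).deriv]
  fun_prop

end Cutoff

section Graph

variable {n : ℕ}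

/-- `|X|² = |x|² + u²`, the squared length of the position vector of the graph. -/
noncomputable def posSq (u : E n → ℝ) (x : E n) : ℝ := ∑ i, x i ^ 2 + u x ^ 2

/-- The Gaussian weight `exp (-|X|²/4)` along the graph. -/
noncomputable def gaussWt (u : E n → ℝ) (x : E n) : ℝ := Real.exp (-(posSq u x) / 4)

/-- The components `uᵢ/√(1+|Du|²)` of `Vfield`. -/
noncomputable def normGrad (u : E n → ℝ) (i : Fin n) (x : E n) : ℝ := (aEl u x)⁻¹ * pd i u x

/-- `u - x·Du`. -/
noncomputable def tangentHeight (u : E n → ℝ) (x : E n) : ℝ := u x - ∑ j, x j * pd j u x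

/-- The components `√g gⁱʲ ∂ⱼ(|X|²/2)` of the density of the tangential part of the position
vector. -/
noncomputable def posField (u : E n → ℝ) (i : Fin n) (x : E n) : ℝ :=
  aEl u x * x i + tangentHeight u x * normGrad u i x

lemma aEl_eq_sqrt (u : E n → ℝ) (x : E n) : aEl u x = Real.sqrt (1 + ∑ i, pd i u x ^ 2) := by
  rw [aEl, EuclideanSpace.norm_sq_eq]
  simp [gradient_apply]

lemma one_add_sum_sq_pos (u : E n → ℝ) (x : E n) : 0 < 1 + ∑ i, pd i u x ^ 2 := by
  positivity

lemma aEl_pos (u : E n → ℝ) (x : E n) : 0 < aEl u x := by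
  rw [aEl_eq_sqrt]
  exact Real.sqrt_pos.2 (one_add_sum_sq_pos u x)

lemma aEl_sq (u : E n → ℝ) (x : E n) : aEl u x ^ 2 = 1 + ∑ i, pd i u x ^ 2 := by
  rw [aEl_eq_sqrt, Real.sq_sqrt (one_add_sum_sq_pos u x).le]

lemma gaussWt_pos (u : E n → ℝ) (x : E n) : 0 < gaussWt u x := Real.exp_pos _

lemma posSq_nonneg (u : E n → ℝ) (x : E n) : 0 ≤ posSq u x := by
  unfold posSq
  positivity

variable {u : E n → ℝ}

lemma contDiff_aEl (hu : ContDiff ℝ ∞ u) : ContDiff ℝ ∞ (aEl u) := by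
  rw [show aEl u = fun x => Real.sqrt (1 + ∑ i, pd i u x ^ 2) from funext (aEl_eq_sqrt u)]
  exact (contDiff_const.add (ContDiff.sum fun i _ => (hu.pd i).pow 2)).sqrt
    fun x => (one_add_sum_sq_pos u x).ne'

lemma contDiff_inv_aEl (hu : ContDiff ℝ ∞ u) : ContDiff ℝ ∞ (fun x => (aEl u x)⁻¹) :=
  (contDiff_aEl hu).inv fun x => (aEl_pos u x).ne'

lemma contDiff_posSq (hu : ContDiff ℝ ∞ u) : ContDiff ℝ ∞ (posSq u) :=
  (ContDiff.sum fun i _ => (contDiff_coord i).pow 2).add (hu.pow 2)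

lemma contDiff_gaussWt (hu : ContDiff ℝ ∞ u) : ContDiff ℝ ∞ (gaussWt u) :=
  ((contDiff_posSq hu).neg.div_const 4).exp

lemma contDiff_normGrad (hu : ContDiff ℝ ∞ u) (i : Fin n) : ContDiff ℝ ∞ (normGrad u i) :=
  (contDiff_inv_aEl hu).mul (hu.pd i)

lemma contDiff_tangentHeight (hu : ContDiff ℝ ∞ u) : ContDiff ℝ ∞ (tangentHeight u) :=
  hu.sub (ContDiff.sum fun i _ => (contDiff_coord i).mul (hu.pd i))

lemma contDiff_posField (hu : ContDiff ℝ ∞ u) (i : Fin n) : ContDiff ℝ ∞ (posField u i) :=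
  ((contDiff_aEl hu).mul (contDiff_coord i)).add
    ((contDiff_tangentHeight hu).mul (contDiff_normGrad hu i))

lemma pd_aEl (hu : ContDiff ℝ ∞ u) (i : Fin n) (x : E n) :
    pd i (aEl u) x = (aEl u x)⁻¹ * ∑ j, pd j u x * pd i (pd j u) x := by
  have hd : ∀ j, DifferentiableAt ℝ (pd j u) x := fun j => (hu.pd j).differentiableAt_of_smooth x
  have hs : DifferentiableAt ℝ (fun y => ∑ j, pd j u y ^ 2) x :=
    (ContDiff.sum fun i _ => (hu.pd i).pow 2).differentiableAt_of_smooth x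
  have h := pd_comp i (x := x) (f := fun y => 1 + ∑ j, pd j u y ^ 2)
    (Real.hasDerivAt_sqrt (one_add_sum_sq_pos u x).ne') ((differentiableAt_const _).add hs)
  rw [pd_add i (differentiableAt_const _) hs, pd_const, pd_sum_sq i hd, ← aEl_eq_sqrt] at h
  rw [← show aEl u = fun x => Real.sqrt (1 + ∑ i, pd i u x ^ 2) from funext (aEl_eq_sqrt u)] at h
  rw [h]
  have := (aEl_pos u x).ne'
  field_simp
  ring

lemma pd_inv_aEl (hu : ContDiff ℝ ∞ u) (i : Fin n) (x : E n) :
    pd i (fun y => (aEl u y)⁻¹) x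
      = -((aEl u x)⁻¹ ^ 3 * ∑ j, pd j u x * pd i (pd j u) x) := by
  rw [pd_comp i (hasDerivAt_inv (aEl_pos u x).ne') ((contDiff_aEl hu).differentiableAt_of_smooth x),
    pd_aEl hu]
  ring

lemma pd_normGrad (hu : ContDiff ℝ ∞ u) (k i : Fin n) (x : E n) :
    pd k (normGrad u i) x = (aEl u x)⁻¹ * (pd k (pd i u) x
      - (aEl u x)⁻¹ ^ 2 * pd i u x * ∑ j, pd j u x * pd k (pd j u) x) := by
  unfold normGrad
  rw [pd_mul k ((contDiff_inv_aEl hu).differentiableAt_of_smooth x)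
    ((hu.pd i).differentiableAt_of_smooth x), pd_inv_aEl hu]
  ring

lemma pd_posSq (hu : ContDiff ℝ ∞ u) (i : Fin n) (x : E n) :
    pd i (posSq u) x = 2 * (x i + u x * pd i u x) := by
  have hc : ∀ j : Fin n, DifferentiableAt ℝ (fun y : E n => y j) x := fun j =>
    (contDiff_coord j).differentiableAt_of_smooth x
  have hd := hu.differentiableAt_of_smooth x
  unfold posSq
  rw [pd_add i ((ContDiff.sum fun i _ => (contDiff_coord i).pow 2).differentiableAt_of_smooth x)
    (hd.fun_pow 2), pd_sum_sq i hc]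
  simp only [sq]
  rw [pd_mul i hd hd]
  simp [pd_coord]
  ring

lemma pd_gaussWt (hu : ContDiff ℝ ∞ u) (i : Fin n) (x : E n) :
    pd i (gaussWt u) x = -(gaussWt u x / 2 * (x i + u x * pd i u x)) := by
  have hg : HasDerivAt (fun t : ℝ => Real.exp (-t / 4))
      (Real.exp (-(posSq u x) / 4) * (-1 / 4)) (posSq u x) :=
    (((hasDerivAt_id (posSq u x)).neg).div_const 4).exp
  have h := pd_comp i hg ((contDiff_posSq hu).differentiableAt_of_smooth x)
  rw [pd_posSq hu] at h
  unfold gaussWt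
  rw [h]
  ring

lemma pd_tangentHeight (hu : ContDiff ℝ ∞ u) (i : Fin n) (x : E n) :
    pd i (tangentHeight u) x = -∑ j, x j * pd i (pd j u) x := by
  have hd : ∀ j, DifferentiableAt ℝ (pd j u) x := fun j => (hu.pd j).differentiableAt_of_smooth x
  unfold tangentHeight
  rw [pd_sub i (hu.differentiableAt_of_smooth x)
    ((ContDiff.sum fun i _ => (contDiff_coord i).mul (hu.pd i)).differentiableAt_of_smooth x),
    pd_sum_coord_mul i hd]
  ring

lemma sum_pd_normGrad (hs : ShrinkerEq u) (x : E n) :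
    ∑ i, pd i (normGrad u i) x = -(tangentHeight u x * (aEl u x)⁻¹) / 2 := by
  have h := hs x
  have hV : ∀ i : Fin n, (fun y => Vfield u y i) = normGrad u i := fun i => by
    ext y
    simp [Vfield, normGrad, gradient_apply]
  simp only [divV, hV] at h
  have hi : ⟪x, gradient u x⟫ = ∑ j, x j * pd j u x := by
    rw [PiLp.inner_apply]
    simp only [gradient_apply, RCLike.inner_apply, conj_trivial, mul_comm]
  rw [hi] at h
  refine h.trans ?_
  have := (aEl_pos u x).ne'
  rw [tangentHeight]
  field_simp
  ring

/-- The drift Laplacian identity `𝓛 |X|² = 2n - |X|²` in divergence form. -/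
lemma sum_pd_gaussWt_mul_posField (hu : ContDiff ℝ ∞ u) (hs : ShrinkerEq u) (x : E n) :
    ∑ i, pd i (fun y => gaussWt u y * posField u i y) x
      = gaussWt u x * aEl u x * (n - posSq u x / 2) := by
  have dW := (contDiff_aEl hu).differentiableAt_of_smooth x
  have dT := (contDiff_tangentHeight hu).differentiableAt_of_smooth x
  have dN := fun i => (contDiff_normGrad hu i).differentiableAt_of_smooth x
  have hV : ∀ i, pd i (posField u i) x = pd i (aEl u) x * x i + aEl u x
      + (pd i (tangentHeight u) x * normGrad u i x
        + tangentHeight u x * pd i (normGrad u i) x) := by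
    intro i
    have dc := (contDiff_coord i).differentiableAt_of_smooth x
    unfold posField
    rw [pd_add i (dW.fun_mul dc) (dT.fun_mul (dN i)), pd_mul i dW dc, pd_mul i dT (dN i), pd_coord]
    simp
  have hcancel : ∑ i, pd i (aEl u) x * x i + ∑ i, pd i (tangentHeight u) x * normGrad u i x
      = 0 := by
    simp only [pd_aEl hu, pd_tangentHeight hu, normGrad]
    have h1 : ∀ i, (aEl u x)⁻¹ * (∑ j, pd j u x * pd i (pd j u) x) * x i
        = ∑ j, (aEl u x)⁻¹ * (pd j u x * pd i (pd j u) x * x i) := fun i => by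
      rw [mul_assoc, Finset.sum_mul, Finset.mul_sum]
    have h2 : ∀ i, (-∑ j, x j * pd i (pd j u) x) * ((aEl u x)⁻¹ * pd i u x)
        = -∑ j, (aEl u x)⁻¹ * (pd i u x * pd j (pd i u) x * x j) := fun i => by
      rw [neg_mul, Finset.sum_mul]
      refine congrArg _ (Finset.sum_congr rfl fun j _ => ?_)
      rw [pd_comm hu i j]
      ring
    simp only [h1, h2]
    rw [Finset.sum_comm, Finset.sum_neg_distrib]
    ring
  have hterm : ∀ i, pd i (fun y => gaussWt u y * posField u i y) x
      = -(gaussWt u x * aEl u x / 2) * x i ^ 2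
        + -(gaussWt u x / 2 * (tangentHeight u x * (aEl u x)⁻¹ + u x * aEl u x))
          * (x i * pd i u x)
        + -(gaussWt u x / 2 * u x * tangentHeight u x * (aEl u x)⁻¹) * pd i u x ^ 2
        + gaussWt u x * (pd i (aEl u) x * x i)
        + gaussWt u x * aEl u x
        + gaussWt u x * (pd i (tangentHeight u) x * normGrad u i x)
        + gaussWt u x * tangentHeight u x * pd i (normGrad u i) x := by
    intro i
    rw [pd_mul i ((contDiff_gaussWt hu).differentiableAt_of_smooth x)
      ((contDiff_posField hu i).differentiableAt_of_smooth x), pd_gaussWt hu, hV]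
    simp only [posField, normGrad]
    ring
  simp only [hterm, Finset.sum_add_distrib, ← Finset.mul_sum]
  rw [sum_pd_normGrad hs, eq_neg_of_add_eq_zero_right hcancel]
  have hs' : ∑ i, pd i u x ^ 2 = aEl u x ^ 2 - 1 := by rw [aEl_sq]; ring
  have hc : ∑ i, x i * pd i u x = u x - tangentHeight u x := by rw [tangentHeight]; ring
  have hr : ∑ i, x i ^ 2 = posSq u x - u x ^ 2 := by rw [posSq]; ring
  have := (aEl_pos u x).ne'
  simp only [hs', hc, hr, Finset.sum_const, Finset.card_univ, Fintype.card_fin, nsmul_eq_mul]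
  field_simp
  ring

/-- The ratio of the Jacobi functions `⟨eₖ, N⟩` and `⟨eₙ₊₁, N⟩` is weighted harmonic. -/
lemma sum_pd_gaussWt_mul_pd_normGrad (hu : ContDiff ℝ ∞ u) (hs : ShrinkerEq u) (k : Fin n)
    (x : E n) :
    ∑ i, pd i (fun y => gaussWt u y * pd k (normGrad u i) y) x = 0 := by
  have dq := (contDiff_inv_aEl hu).differentiableAt_of_smooth x
  have du := hu.differentiableAt_of_smooth x
  have dN := fun i => (contDiff_normGrad hu i).differentiableAt_of_smooth x
  have dS : DifferentiableAt ℝ (fun y : E n => ∑ j, y j * normGrad u j y) x :=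
    (ContDiff.sum fun i _ =>
      (contDiff_coord i).mul (contDiff_normGrad hu i)).differentiableAt_of_smooth x
  have hfun : (fun y => ∑ i, pd i (normGrad u i) y)
      = fun y => (1 / 2 : ℝ) * (∑ j, y j * normGrad u j y - u y * (aEl u y)⁻¹) := by
    ext y
    rw [sum_pd_normGrad hs, tangentHeight]
    have : ∑ j, y j * normGrad u j y = (∑ j, y j * pd j u y) * (aEl u y)⁻¹ := by
      rw [Finset.sum_mul]
      exact Finset.sum_congr rfl fun j _ => by rw [normGrad]; ring
    rw [this]
    ring
  have h := congrArg (fun f => pd k f x) hfun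
  simp only at h
  rw [pd_sum _ _ fun i _ => ((contDiff_normGrad hu i).pd i).differentiableAt_of_smooth x,
    pd_mul k (differentiableAt_const _) (dS.fun_sub (du.fun_mul dq)), pd_const,
    pd_sub k dS (du.fun_mul dq), pd_sum_coord_mul k dN, pd_mul k du dq] at h
  have hq : ∑ i, pd i u x * pd k (normGrad u i) x = -pd k (fun y => (aEl u y)⁻¹) x := by
    have e : ∀ i, pd i u x * pd k (normGrad u i) x
        = (aEl u x)⁻¹ * (pd i u x * pd k (pd i u) x)
          - (aEl u x)⁻¹ ^ 3 * (∑ j, pd j u x * pd k (pd j u) x) * pd i u x ^ 2 := fun i => by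
      rw [pd_normGrad hu]
      ring
    have hs' : ∑ i, pd i u x ^ 2 = aEl u x ^ 2 - 1 := by rw [aEl_sq]; ring
    simp only [e, Finset.sum_sub_distrib, ← Finset.mul_sum]
    rw [pd_inv_aEl hu, hs']
    have := (aEl_pos u x).ne'
    field_simp
    ring
  have hterm : ∀ i, pd i (fun y => gaussWt u y * pd k (normGrad u i) y) x
      = gaussWt u x * pd k (pd i (normGrad u i)) x
        - gaussWt u x / 2 * (x i * pd k (normGrad u i) x)
        - gaussWt u x / 2 * u x * (pd i u x * pd k (normGrad u i) x) := by
    intro i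
    rw [pd_mul i ((contDiff_gaussWt hu).differentiableAt_of_smooth x)
      (((contDiff_normGrad hu i).pd k).differentiableAt_of_smooth x), pd_gaussWt hu,
      pd_comm (contDiff_normGrad hu i) i k]
    ring
  simp only [hterm, Finset.sum_sub_distrib, ← Finset.mul_sum]
  rw [hq, h, normGrad]
  ring

end Graph

section Estimates

variable {n : ℕ}

/-- The cutoff `(1 - |X|²/R)₊` along the graph. -/
noncomputable def cutoff (u : E n → ℝ) (R : ℝ) (x : E n) : ℝ := max (1 - posSq u x / R) 0

/-- The bilinear form `gⁱʲ ξᵢ ζⱼ / √g` of the graph. -/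
noncomputable def metricForm (u : E n → ℝ) (x : E n) (ξ ζ : Fin n → ℝ) : ℝ :=
  (aEl u x)⁻¹ * (∑ i, ξ i * ζ i
    - (aEl u x)⁻¹ ^ 2 * (∑ i, pd i u x * ξ i) * ∑ i, pd i u x * ζ i)

lemma cutoff_nonneg (u : E n → ℝ) (R : ℝ) (x : E n) : 0 ≤ cutoff u R x := le_max_right _ _

lemma cutoff_le_one (u : E n → ℝ) {R : ℝ} (hR : 0 < R) (x : E n) : cutoff u R x ≤ 1 :=
  max_le (sub_le_self _ (div_nonneg (posSq_nonneg u x) hR.le)) zero_le_one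

lemma cutoff_mono (u : E n → ℝ) {R S : ℝ} (hR : 0 < R) (hRS : R ≤ S) (x : E n) :
    cutoff u R x ≤ cutoff u S x :=
  max_le_max_right _ (sub_le_sub_left (div_le_div_of_nonneg_left (posSq_nonneg u x) hR hRS) _)

lemma cutoff_eq_zero (u : E n → ℝ) {R : ℝ} (hR : 0 < R) {x : E n} (h : R ≤ posSq u x) :
    cutoff u R x = 0 := by
  refine max_eq_right ?_
  have : 1 ≤ posSq u x / R := (one_le_div hR).2 h
  linarith

lemma cutoff_mul_posSq_le (u : E n → ℝ) {R : ℝ} (hR : 0 < R) (x : E n) :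
    cutoff u R x * posSq u x ≤ R * cutoff u R x := by
  rcases le_total R (posSq u x) with h | h
  · simp [cutoff_eq_zero u hR h]
  · nlinarith [cutoff_nonneg u R x]

lemma hasCompactSupport_cutoff (u : E n → ℝ) {R : ℝ} (hR : 0 < R) :
    HasCompactSupport (cutoff u R) := by
  refine HasCompactSupport.intro (isCompact_closedBall (0 : E n) (√R)) fun x hx => ?_
  refine cutoff_eq_zero u hR ?_
  rw [mem_closedBall_zero_iff, not_le, Real.sqrt_lt' (lt_of_le_of_lt (Real.sqrt_nonneg R) (by
    simpa using hx)), EuclideanSpace.norm_sq_eq] at hx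
  simp only [Real.norm_eq_abs, sq_abs] at hx
  unfold posSq
  nlinarith [sq_nonneg (u x)]

lemma metricForm_self_ge (u : E n → ℝ) (x : E n) (ξ : Fin n → ℝ) :
    (aEl u x)⁻¹ ^ 3 * ∑ i, ξ i ^ 2 ≤ metricForm u x ξ ξ := by
  have hcs := Finset.sum_mul_sq_le_sq_mul_sq Finset.univ (fun i => pd i u x) ξ
  have hs : ∑ i, pd i u x ^ 2 = aEl u x ^ 2 - 1 := by rw [aEl_sq]; ring
  have hW := aEl_pos u x
  rw [hs] at hcs
  have hξ : ∑ i, ξ i * ξ i = ∑ i, ξ i ^ 2 := Finset.sum_congr rfl fun i _ => (sq _).symm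
  rw [metricForm, hξ]
  have key : metricForm u x ξ ξ - (aEl u x)⁻¹ ^ 3 * ∑ i, ξ i ^ 2
      = (aEl u x)⁻¹ ^ 3 * ((aEl u x ^ 2 - 1) * ∑ i, ξ i ^ 2 - (∑ i, pd i u x * ξ i) ^ 2) := by
    rw [metricForm, hξ]
    field_simp
    ring
  have : 0 ≤ (aEl u x)⁻¹ ^ 3 * ((aEl u x ^ 2 - 1) * ∑ i, ξ i ^ 2 - (∑ i, pd i u x * ξ i) ^ 2) :=
    mul_nonneg (by positivity) (sub_nonneg.2 hcs)
  rw [← key, metricForm, hξ] at this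
  linarith

lemma metricForm_self_nonneg (u : E n → ℝ) (x : E n) (ξ : Fin n → ℝ) : 0 ≤ metricForm u x ξ ξ :=
  le_trans (mul_nonneg (pow_nonneg (inv_nonneg.2 (aEl_pos u x).le) 3)
    (Finset.sum_nonneg fun i _ => sq_nonneg (ξ i))) (metricForm_self_ge u x ξ)

lemma metricForm_smul_sub_smul (u : E n → ℝ) (x : E n) (ξ ζ : Fin n → ℝ) (s t : ℝ) :
    metricForm u x (fun i => s * ξ i - t * ζ i) (fun i => s * ξ i - t * ζ i)
      = s ^ 2 * metricForm u x ξ ξ - 2 * s * t * metricForm u x ζ ξ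
        + t ^ 2 * metricForm u x ζ ζ := by
  have h1 : ∑ i, (s * ξ i - t * ζ i) * (s * ξ i - t * ζ i)
      = s ^ 2 * ∑ i, ξ i * ξ i - 2 * s * t * ∑ i, ζ i * ξ i + t ^ 2 * ∑ i, ζ i * ζ i := by
    simp only [Finset.mul_sum, ← Finset.sum_sub_distrib, ← Finset.sum_add_distrib]
    exact Finset.sum_congr rfl fun i _ => by ring
  have h2 : ∑ i, pd i u x * (s * ξ i - t * ζ i)
      = s * ∑ i, pd i u x * ξ i - t * ∑ i, pd i u x * ζ i := by
    simp only [Finset.mul_sum, ← Finset.sum_sub_distrib]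
    exact Finset.sum_congr rfl fun i _ => by ring
  simp only [metricForm, h1, h2]
  ring

lemma sum_coord_add_mul_sq (u : E n → ℝ) (x : E n) :
    ∑ i, (x i + u x * pd i u x) ^ 2
      = ∑ i, x i ^ 2 + 2 * u x * ∑ i, x i * pd i u x + u x ^ 2 * ∑ i, pd i u x ^ 2 := by
  simp only [Finset.mul_sum, ← Finset.sum_add_distrib]
  exact Finset.sum_congr rfl fun i _ => by ring

/-- `|∇|X|²|² ≤ 4|X|²` along the graph. -/
lemma metricForm_pos_le (u : E n → ℝ) (x : E n) :
    metricForm u x (fun i => x i + u x * pd i u x) (fun i => x i + u x * pd i u x)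
      ≤ (aEl u x)⁻¹ * posSq u x := by
  have hW := aEl_pos u x
  have h1 : ∑ i, (x i + u x * pd i u x) * (x i + u x * pd i u x)
      = ∑ i, (x i + u x * pd i u x) ^ 2 := Finset.sum_congr rfl fun i _ => (sq _).symm
  have h2 : ∑ i, pd i u x * (x i + u x * pd i u x)
      = ∑ i, x i * pd i u x + u x * ∑ i, pd i u x ^ 2 := by
    simp only [Finset.mul_sum, ← Finset.sum_add_distrib]
    exact Finset.sum_congr rfl fun i _ => by ring
  have hs : ∑ i, pd i u x ^ 2 = aEl u x ^ 2 - 1 := by rw [aEl_sq]; ring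
  simp only [metricForm, h1, h2, sum_coord_add_mul_sq, posSq, hs]
  refine mul_le_mul_of_nonneg_left ?_ (inv_nonneg.2 hW.le)
  set c := ∑ i, x i * pd i u x
  have : 0 ≤ (aEl u x)⁻¹ ^ 2 * (c - u x) ^ 2 := by positivity
  have e : (aEl u x)⁻¹ ^ 2 * (c + u x * (aEl u x ^ 2 - 1)) * (c + u x * (aEl u x ^ 2 - 1))
      = (aEl u x)⁻¹ ^ 2 * (c - u x) ^ 2 + 2 * u x * (c - u x) + u x ^ 2 * aEl u x ^ 2 := by
    field_simp
    ring
  rw [e]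
  nlinarith

lemma sum_mul_posField_nonneg (u : E n → ℝ) (x : E n) :
    0 ≤ ∑ i, (x i + u x * pd i u x) * posField u i x := by
  have hW := aEl_pos u x
  have hs : ∑ i, pd i u x ^ 2 = aEl u x ^ 2 - 1 := by rw [aEl_sq]; ring
  have hexp : ∑ i, (x i + u x * pd i u x) * posField u i x
      = aEl u x * ∑ i, x i ^ 2
        + (aEl u x * u x + tangentHeight u x * (aEl u x)⁻¹) * ∑ i, x i * pd i u x
        + u x * tangentHeight u x * (aEl u x)⁻¹ * ∑ i, pd i u x ^ 2 := by
    simp only [Finset.mul_sum, ← Finset.sum_add_distrib]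
    exact Finset.sum_congr rfl fun i _ => by rw [posField, normGrad]; ring
  have hcs := Finset.sum_mul_sq_le_sq_mul_sq Finset.univ (fun i => x i) (fun i => pd i u x)
  have hsq : 0 ≤ ∑ i, (x i + u x * pd i u x) ^ 2 := Finset.sum_nonneg fun i _ => sq_nonneg _
  rw [sum_coord_add_mul_sq] at hsq
  rw [hexp, tangentHeight]
  rw [hs] at hcs hsq ⊢
  set c := ∑ i, x i * pd i u x
  set r := ∑ i, x i ^ 2
  have e : aEl u x * r + (aEl u x * u x + (u x - c) * (aEl u x)⁻¹) * c
      + u x * (u x - c) * (aEl u x)⁻¹ * (aEl u x ^ 2 - 1)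
      = (aEl u x)⁻¹ * ((r * (aEl u x ^ 2 - 1) - c ^ 2)
        + (r + 2 * u x * c + u x ^ 2 * (aEl u x ^ 2 - 1))) := by
    field_simp
    ring
  rw [e]
  exact mul_nonneg (inv_nonneg.2 hW.le) (add_nonneg (sub_nonneg.2 hcs) hsq)

variable {u : E n → ℝ}

lemma continuous_cutoff (hu : ContDiff ℝ ∞ u) (R : ℝ) : Continuous (cutoff u R) := by
  have := (contDiff_posSq hu).continuous
  unfold cutoff
  fun_prop

lemma contDiff_cutoff_sq (hu : ContDiff ℝ ∞ u) (R : ℝ) : ContDiff ℝ 1 (fun x => cutoff u R x ^ 2) :=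
  contDiff_max_zero_sq.comp
    (contDiff_const.sub (((contDiff_posSq hu).of_le (by simp)).div_const R))

lemma pd_cutoff_sq (hu : ContDiff ℝ ∞ u) (R : ℝ) (i : Fin n) (x : E n) :
    pd i (fun y => cutoff u R y ^ 2) x
      = -(4 / R * cutoff u R x * (x i + u x * pd i u x)) := by
  have hd := (contDiff_posSq hu).differentiableAt_of_smooth x
  have hg : HasDerivAt (fun t : ℝ => max (1 - t / R) 0 ^ 2)
      (2 * max (1 - posSq u x / R) 0 * -(1 / R)) (posSq u x) :=
    (hasDerivAt_max_zero_sq _).comp (posSq u x)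
      (((hasDerivAt_id (posSq u x)).div_const R).const_sub 1)
  have h := pd_comp i hg hd
  rw [pd_posSq hu] at h
  refine h.trans ?_
  rw [cutoff]
  ring

lemma integrable_cutoff_pow_mul (hu : ContDiff ℝ ∞ u) {R : ℝ} (hR : 0 < R) {m : ℕ} (hm : m ≠ 0)
    {g : E n → ℝ} (hg : Continuous g) : Integrable (fun x => cutoff u R x ^ m * g x) :=
  (((continuous_cutoff hu R).pow m).mul hg).integrable_of_hasCompactSupport
    ((hasCompactSupport_cutoff u hR).comp_left (g := fun t => t ^ m) (zero_pow hm)).mul_right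

lemma integral_cutoff_sq_mul_posSq_le (hu : ContDiff ℝ ∞ u) (hs : ShrinkerEq u) {R : ℝ}
    (hR : 0 < R) :
    ∫ x, cutoff u R x ^ 2 * (posSq u x * (gaussWt u x * aEl u x))
      ≤ 2 * n * ∫ x, cutoff u R x ^ 2 * (gaussWt u x * aEl u x) := by
  have cρ := (contDiff_gaussWt hu).continuous
  have cW := (contDiff_aEl hu).continuous
  have cf := (contDiff_posSq hu).continuous
  have hdiv := integral_mul_sum_pd (contDiff_cutoff_sq hu R)
    ((hasCompactSupport_cutoff u hR).comp_left (g := fun t => t ^ 2) (by simp))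
    (F := fun i y => gaussWt u y * posField u i y)
    (fun i => ((contDiff_gaussWt hu).mul (contDiff_posField hu i)).of_le (by simp))
  have hpos : ∫ x, ∑ i, pd i (fun y => cutoff u R y ^ 2) x * (gaussWt u x * posField u i x)
      ≤ 0 := by
    refine integral_nonpos fun x => ?_
    have : ∑ i, pd i (fun y => cutoff u R y ^ 2) x * (gaussWt u x * posField u i x)
        = -(4 / R * cutoff u R x * gaussWt u x
          * ∑ i, (x i + u x * pd i u x) * posField u i x) := by
      rw [Finset.mul_sum, ← Finset.sum_neg_distrib]
      exact Finset.sum_congr rfl fun i _ => by rw [pd_cutoff_sq hu]; ring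
    have h0 : 0 ≤ 4 / R * cutoff u R x * gaussWt u x
          * ∑ i, (x i + u x * pd i u x) * posField u i x :=
      mul_nonneg (mul_nonneg (mul_nonneg (by positivity) (cutoff_nonneg u R x))
        (gaussWt_pos u x).le) (sum_mul_posField_nonneg u x)
    simp only [Pi.zero_apply, this]
    linarith
  have i1 : Integrable (fun x => cutoff u R x ^ 2 * (posSq u x * (gaussWt u x * aEl u x))) :=
    integrable_cutoff_pow_mul hu hR two_ne_zero (cf.mul (cρ.mul cW))
  have i2 : Integrable (fun x => cutoff u R x ^ 2 * (gaussWt u x * aEl u x)) :=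
    integrable_cutoff_pow_mul hu hR two_ne_zero (cρ.mul cW)
  have hsplit : ∫ x, cutoff u R x ^ 2 * ∑ i, pd i (fun y => gaussWt u y * posField u i y) x
      = n * (∫ x, cutoff u R x ^ 2 * (gaussWt u x * aEl u x))
        - 1 / 2 * ∫ x, cutoff u R x ^ 2 * (posSq u x * (gaussWt u x * aEl u x)) := by
    rw [← integral_const_mul, ← integral_const_mul,
      ← integral_sub (i2.const_mul _) (i1.const_mul _)]
    refine integral_congr_ae (Eventually.of_forall fun x => ?_)
    simp only [sum_pd_gaussWt_mul_posField hu hs]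
    ring
  linarith

/-- A graphical self-shrinker has finite weighted area. -/
lemma exists_integral_cutoff_sq_le (hu : ContDiff ℝ ∞ u) (hs : ShrinkerEq u) :
    ∃ C : ℝ, ∀ R : ℝ, 0 < R → ∫ x, cutoff u R x ^ 2 * (gaussWt u x * aEl u x) ≤ C := by
  have cρ := (contDiff_gaussWt hu).continuous
  have cW := (contDiff_aEl hu).continuous
  have cf := (contDiff_posSq hu).continuous
  have hK : (0 : ℝ) < 4 * n + 1 := by positivity
  refine ⟨2 * ∫ x, cutoff u (4 * n + 1) x * (gaussWt u x * aEl u x), fun R hR => ?_⟩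
  have i1 : Integrable (fun x => cutoff u R x ^ 2 * (posSq u x * (gaussWt u x * aEl u x))) :=
    integrable_cutoff_pow_mul hu hR two_ne_zero (cf.mul (cρ.mul cW))
  have i2 : Integrable (fun x => cutoff u R x ^ 2 * (gaussWt u x * aEl u x)) :=
    integrable_cutoff_pow_mul hu hR two_ne_zero (cρ.mul cW)
  have i3 : Integrable (fun x => cutoff u (4 * n + 1) x * (gaussWt u x * aEl u x)) := by
    simpa using integrable_cutoff_pow_mul hu hK one_ne_zero (cρ.mul cW)
  have hle : ∫ x, cutoff u R x ^ 2 * (gaussWt u x * aEl u x)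
      ≤ ∫ x, (cutoff u (4 * n + 1) x * (gaussWt u x * aEl u x)
        + 1 / (4 * n + 1) * (cutoff u R x ^ 2 * (posSq u x * (gaussWt u x * aEl u x)))) := by
    refine integral_mono i2 (i3.add (i1.const_mul _)) fun x => ?_
    have hm : 0 ≤ gaussWt u x * aEl u x := (mul_pos (gaussWt_pos u x) (aEl_pos u x)).le
    have h0 := cutoff_nonneg u R x
    have h1 := cutoff_le_one u hR x
    have hsq : cutoff u R x ^ 2 ≤ 1 := pow_le_one₀ h0 h1
    have hge : 1 - posSq u x / (4 * n + 1) ≤ cutoff u (4 * n + 1) x := le_max_left _ _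
    have hge' := cutoff_nonneg u (4 * n + 1) x
    have key : cutoff u R x ^ 2
        ≤ cutoff u (4 * n + 1) x + 1 / (4 * n + 1) * (cutoff u R x ^ 2 * posSq u x) := by
      have : cutoff u R x ^ 2 * (1 - posSq u x / (4 * n + 1)) ≤ cutoff u (4 * n + 1) x :=
        (mul_le_mul_of_nonneg_left hge (sq_nonneg _)).trans (mul_le_of_le_one_left hge' hsq)
      have e : 1 / (4 * n + 1) * (cutoff u R x ^ 2 * posSq u x)
        = cutoff u R x ^ 2 * (posSq u x / (4 * n + 1)) := by ring
      rw [e]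
      linarith
    calc cutoff u R x ^ 2 * (gaussWt u x * aEl u x)
        ≤ (cutoff u (4 * n + 1) x + 1 / (4 * n + 1) * (cutoff u R x ^ 2 * posSq u x))
          * (gaussWt u x * aEl u x) := mul_le_mul_of_nonneg_right key hm
      _ = _ := by ring
  rw [integral_add i3 (i1.const_mul _), integral_const_mul] at hle
  have hvol := integral_cutoff_sq_mul_posSq_le hu hs hR
  have hM : 0 ≤ ∫ x, cutoff u R x ^ 2 * (gaussWt u x * aEl u x) :=
    integral_nonneg fun x =>
      mul_nonneg (sq_nonneg _) (mul_pos (gaussWt_pos u x) (aEl_pos u x)).le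
  set M := ∫ x, cutoff u R x ^ 2 * (gaussWt u x * aEl u x)
  have h2 : 1 / (4 * (n : ℝ) + 1)
      * ∫ x, cutoff u R x ^ 2 * (posSq u x * (gaussWt u x * aEl u x)) ≤ 1 / 2 * M := by
    rw [one_div, inv_mul_le_iff₀ hK]
    nlinarith
  linarith

lemma continuous_metricForm_hess (hu : ContDiff ℝ ∞ u) (k : Fin n) :
    Continuous fun x => metricForm u x (fun i => pd i (pd k u) x) (fun i => pd i (pd k u) x) := by
  have cq := (contDiff_inv_aEl hu).continuous
  have cp := fun i => (hu.pd i).continuous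
  have ch := fun i => ((hu.pd k).pd i).continuous
  unfold metricForm
  fun_prop

/-- The Caccioppoli inequality for `uₖ`. -/
lemma integral_cutoff_mul_metricForm_le (hu : ContDiff ℝ ∞ u) (hs : ShrinkerEq u) (k : Fin n)
    {R : ℝ} (hR : 0 < R) :
    ∫ x, cutoff u R x ^ 4 * (gaussWt u x *
        metricForm u x (fun i => pd i (pd k u) x) (fun i => pd i (pd k u) x))
      ≤ 64 / R * ∫ x, cutoff u R x ^ 2 * (gaussWt u x * aEl u x) := by
  have cη := continuous_cutoff hu R
  have cρ := (contDiff_gaussWt hu).continuous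
  have cW := (contDiff_aEl hu).continuous
  have cp := fun i => (hu.pd i).continuous
  have ch := fun i => ((hu.pd k).pd i).continuous
  have cQ := fun i => ((contDiff_normGrad hu i).pd k).continuous
  have cA := continuous_metricForm_hess hu k
  have hη2 := contDiff_cutoff_sq hu R
  have hp : ContDiff ℝ 1 (pd k u) := (hu.pd k).of_le (by simp)
  have hη4 : ContDiff ℝ 1 (fun x => cutoff u R x ^ 2 * cutoff u R x ^ 2) := hη2.mul hη2
  have hcs : HasCompactSupport (fun x => cutoff u R x ^ 2 * cutoff u R x ^ 2 * pd k u x) :=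
    ((hasCompactSupport_cutoff u hR).comp_left (g := fun t => t ^ 2 * t ^ 2)
      (by simp)).mul_right
  have hpd : ∀ i x, pd i (fun x => cutoff u R x ^ 2 * cutoff u R x ^ 2 * pd k u x) x
      = cutoff u R x ^ 4 * pd i (pd k u) x
        - 8 / R * cutoff u R x ^ 3 * pd k u x * (x i + u x * pd i u x) := by
    intro i x
    have d2 := hη2.differentiable (by simp) x
    rw [pd_mul i (hη4.differentiable (by simp) x) (hp.differentiable (by simp) x),
      pd_mul i d2 d2, pd_cutoff_sq hu]
    ring
  have hform : ∀ x (ζ : Fin n → ℝ), ∑ i, ζ i * pd k (normGrad u i) x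
      = metricForm u x ζ (fun i => pd i (pd k u) x) := by
    intro x ζ
    simp only [pd_normGrad hu, metricForm, pd_comm hu k]
    simp only [mul_sub, Finset.mul_sum, Finset.sum_mul, Finset.sum_sub_distrib]
    congr 1
    · exact Finset.sum_congr rfl fun i _ => by ring
    · rw [Finset.sum_comm]
      exact Finset.sum_congr rfl fun i _ => Finset.sum_congr rfl fun j _ => by ring
  have hdiv := integral_mul_sum_pd (hη4.mul hp) hcs
    (F := fun i y => gaussWt u y * pd k (normGrad u i) y)
    (fun i => ((contDiff_gaussWt hu).mul ((contDiff_normGrad hu i).pd k)).of_le (by simp))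
  simp only [sum_pd_gaussWt_mul_pd_normGrad hu hs, mul_zero, integral_zero] at hdiv
  have i2 : Integrable (fun x => cutoff u R x ^ 2 * (gaussWt u x * aEl u x)) :=
    integrable_cutoff_pow_mul hu hR two_ne_zero (cρ.mul cW)
  have i4 : Integrable (fun x => cutoff u R x ^ 4 * (gaussWt u x *
        metricForm u x (fun i => pd i (pd k u) x) (fun i => pd i (pd k u) x))) :=
    integrable_cutoff_pow_mul hu hR four_ne_zero (cρ.mul cA)
  have hsum : ∀ x, ∑ i, pd i (fun x => cutoff u R x ^ 2 * cutoff u R x ^ 2 * pd k u x) x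
        * (gaussWt u x * pd k (normGrad u i) x)
      = gaussWt u x * (cutoff u R x ^ 4
          * metricForm u x (fun i => pd i (pd k u) x) (fun i => pd i (pd k u) x)
        - 8 / R * cutoff u R x ^ 3 * pd k u x
          * metricForm u x (fun i => x i + u x * pd i u x) (fun i => pd i (pd k u) x)) := by
    intro x
    rw [← hform, ← hform, Finset.mul_sum, Finset.mul_sum, ← Finset.sum_sub_distrib, Finset.mul_sum]
    exact Finset.sum_congr rfl fun i _ => by rw [hpd]; ring
  have i5 : Integrable (fun x => ∑ i,
      pd i (fun x => cutoff u R x ^ 2 * cutoff u R x ^ 2 * pd k u x) x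
        * (gaussWt u x * pd k (normGrad u i) x)) := by
    refine integrable_finsetSum _ fun i _ => ?_
    have cu := hu.continuous
    have cx : Continuous fun x : E n => x i := (contDiff_coord i).continuous
    have cpk := cp k
    have cpi := cp i
    have chi := ch i
    have cQi := cQ i
    have hg : Continuous fun x => (cutoff u R x * pd i (pd k u) x
        - 8 / R * pd k u x * (x i + u x * pd i u x))
          * (gaussWt u x * pd k (normGrad u i) x) := by fun_prop
    refine (integrable_cutoff_pow_mul hu hR three_ne_zero hg).congr
      (Eventually.of_forall fun x => ?_)
    simp only [hpd]
    ring
  have hle : ∫ x, (1 / 2 * (cutoff u R x ^ 4 * (gaussWt u x *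
        metricForm u x (fun i => pd i (pd k u) x) (fun i => pd i (pd k u) x)))
        - 32 / R * (cutoff u R x ^ 2 * (gaussWt u x * aEl u x)))
      ≤ ∫ x, ∑ i, pd i (fun x => cutoff u R x ^ 2 * cutoff u R x ^ 2 * pd k u x) x
        * (gaussWt u x * pd k (normGrad u i) x) := by
    refine integral_mono ((i4.const_mul _).sub (i2.const_mul _)) i5 fun x => ?_
    simp only [hsum]
    have hsq := metricForm_self_nonneg u x (fun i => cutoff u R x ^ 2 * pd i (pd k u) x
      - 8 / R * cutoff u R x * pd k u x * (x i + u x * pd i u x))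
    rw [metricForm_smul_sub_smul u x (fun i => pd i (pd k u) x)
      (fun i => x i + u x * pd i u x)] at hsq
    have hW := aEl_pos u x
    have hη := cutoff_nonneg u R x
    have hpk : pd k u x ^ 2 * (aEl u x)⁻¹ ≤ aEl u x := by
      rw [← div_eq_mul_inv, div_le_iff₀ hW, ← sq, aEl_sq]
      have := Finset.single_le_sum (f := fun i => pd i u x ^ 2) (fun i _ => sq_nonneg _)
        (Finset.mem_univ k)
      linarith
    have hyy : (8 / R * cutoff u R x * pd k u x) ^ 2
        * metricForm u x (fun i => x i + u x * pd i u x) (fun i => x i + u x * pd i u x)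
        ≤ 64 / R * (cutoff u R x ^ 2 * aEl u x) := by
      calc _ ≤ (8 / R * cutoff u R x * pd k u x) ^ 2 * ((aEl u x)⁻¹ * posSq u x) :=
            mul_le_mul_of_nonneg_left (metricForm_pos_le u x) (sq_nonneg _)
        _ = 64 / R ^ 2 * cutoff u R x * (pd k u x ^ 2 * (aEl u x)⁻¹)
              * (cutoff u R x * posSq u x) := by ring
        _ ≤ 64 / R ^ 2 * cutoff u R x * aEl u x * (R * cutoff u R x) := by
            have h1 := cutoff_mul_posSq_le u hR x
            have h2 := mul_nonneg hη (posSq_nonneg u x)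
            gcongr
        _ = _ := by field_simp
    set A := metricForm u x (fun i => pd i (pd k u) x) (fun i => pd i (pd k u) x)
    set B := metricForm u x (fun i => x i + u x * pd i u x) (fun i => pd i (pd k u) x)
    have key : 1 / 2 * (cutoff u R x ^ 4 * A) - 32 / R * (cutoff u R x ^ 2 * aEl u x)
        ≤ cutoff u R x ^ 4 * A - 8 / R * cutoff u R x ^ 3 * pd k u x * B := by
      have e : 2 * cutoff u R x ^ 2 * (8 / R * cutoff u R x * pd k u x) * B
          = 2 * (8 / R * cutoff u R x ^ 3 * pd k u x * B) := by ring
      rw [e] at hsq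
      have e' : 64 / R * (cutoff u R x ^ 2 * aEl u x)
          = 2 * (32 / R * (cutoff u R x ^ 2 * aEl u x)) := by ring
      rw [e'] at hyy
      have e4 : (cutoff u R x ^ 2) ^ 2 * A = cutoff u R x ^ 4 * A := by ring
      linarith
    calc _ = gaussWt u x * (1 / 2 * (cutoff u R x ^ 4 * A)
          - 32 / R * (cutoff u R x ^ 2 * aEl u x)) := by ring
      _ ≤ _ := mul_le_mul_of_nonneg_left key (gaussWt_pos u x).le
  rw [integral_sub (i4.const_mul _) (i2.const_mul _), integral_const_mul, integral_const_mul] at hle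
  have e : 64 / R * ∫ x, cutoff u R x ^ 2 * (gaussWt u x * aEl u x)
      = 2 * (32 / R * ∫ x, cutoff u R x ^ 2 * (gaussWt u x * aEl u x)) := by ring
  rw [e]
  linarith

/-- The Hessian of an entire graphical self-shrinker vanishes. -/
lemma pd_pd_eq_zero (hu : ContDiff ℝ ∞ u) (hs : ShrinkerEq u) (i k : Fin n) (x₀ : E n) :
    pd i (pd k u) x₀ = 0 := by
  obtain ⟨C, hC⟩ := exists_integral_cutoff_sq_le hu hs
  have cρ := (contDiff_gaussWt hu).continuous
  have cA := continuous_metricForm_hess hu k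
  set A := fun x => metricForm u x (fun i => pd i (pd k u) x) (fun i => pd i (pd k u) x) with hA
  have hA0 : ∀ x, 0 ≤ A x := fun x => metricForm_self_nonneg u x _
  set S := posSq u x₀ + 1 with hS
  have hS0 : 0 < S := by have := posSq_nonneg u x₀; linarith
  have hcont : ∀ R, Continuous fun x => cutoff u R x ^ 4 * (gaussWt u x * A x) := fun R =>
    ((continuous_cutoff hu R).pow 4).mul (cρ.mul cA)
  have hsupp : ∀ R, 0 < R → HasCompactSupport fun x => cutoff u R x ^ 4 * (gaussWt u x * A x) :=
    fun R hR => ((hasCompactSupport_cutoff u hR).comp_left (g := fun t => t ^ 4)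
      (by simp)).mul_right
  have hint : ∀ R, 0 < R → Integrable fun x => cutoff u R x ^ 4 * (gaussWt u x * A x) :=
    fun R hR => (hcont R).integrable_of_hasCompactSupport (hsupp R hR)
  have hnn : ∀ x, 0 ≤ cutoff u S x ^ 4 * (gaussWt u x * A x) := fun x =>
    mul_nonneg (pow_nonneg (cutoff_nonneg u S x) 4) (mul_nonneg (gaussWt_pos u x).le (hA0 x))
  have hbound : ∀ R, S ≤ R → ∫ x, cutoff u S x ^ 4 * (gaussWt u x * A x) ≤ 64 * C / R := by
    intro R hSR
    have hR := hS0.trans_le hSR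
    calc ∫ x, cutoff u S x ^ 4 * (gaussWt u x * A x)
        ≤ ∫ x, cutoff u R x ^ 4 * (gaussWt u x * A x) :=
          integral_mono (hint S hS0) (hint R hR) fun x =>
            mul_le_mul_of_nonneg_right
              (pow_le_pow_left₀ (cutoff_nonneg u S x) (cutoff_mono u hS0 hSR x) 4)
              (mul_nonneg (gaussWt_pos u x).le (hA0 x))
      _ ≤ 64 / R * ∫ x, cutoff u R x ^ 2 * (gaussWt u x * aEl u x) :=
          integral_cutoff_mul_metricForm_le hu hs k hR
      _ ≤ 64 / R * C := mul_le_mul_of_nonneg_left (hC R hR) (by positivity)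
      _ = 64 * C / R := by ring
  have hzero : ∫ x, cutoff u S x ^ 4 * (gaussWt u x * A x) ≤ 0 :=
    ge_of_tendsto (tendsto_const_nhds.div_atTop tendsto_id)
      ((eventually_ge_atTop S).mono hbound)
  have hAx : A x₀ = 0 := by
    by_contra hne
    have hcut : 0 < cutoff u S x₀ := by
      refine lt_max_of_lt_left (sub_pos.2 ((div_lt_one hS0).2 ?_))
      linarith
    refine hzero.not_gt ((hcont S).integral_pos_of_hasCompactSupport_nonneg_nonzero
      (hsupp S hS0) hnn (x := x₀) ?_)
    exact (mul_pos (pow_pos hcut 4)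
      (mul_pos (gaussWt_pos u x₀) (lt_of_le_of_ne (hA0 x₀) (Ne.symm hne)))).ne'
  have hge := metricForm_self_ge u x₀ (fun i => pd i (pd k u) x₀)
  have hq : 0 < (aEl u x₀)⁻¹ ^ 3 := pow_pos (inv_pos.2 (aEl_pos u x₀)) 3
  have hsum : ∑ i, pd i (pd k u) x₀ ^ 2 ≤ 0 := by
    by_contra hpos
    have := mul_pos hq (not_le.1 hpos)
    linarith [hAx.symm.le, hAx.le]
  have := Finset.single_le_sum (f := fun i => pd i (pd k u) x₀ ^ 2) (fun i _ => sq_nonneg _)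
    (Finset.mem_univ i)
  exact pow_eq_zero_iff two_ne_zero |>.1 (le_antisymm (this.trans hsum) (sq_nonneg _))

end Estimates

/-- Bernstein theorem for graphical self-shrinkers: every smooth entire
solution of the self-shrinker equation is linear, `u(x) = a₁x₁ + ⋯ + aₙxₙ`. -/
theorem stmt_15 (n : ℕ) (u : E n → ℝ) (hu : ContDiff ℝ (⊤ : ℕ∞) u) (hshr : ShrinkerEq u) :
    ∃ a : E n, ∀ x, u x = ⟪a, x⟫ := by
  refine ⟨gradient u 0, fun x => ?_⟩
  have hgrad : ∀ j, pd j u x = pd j u 0 := fun j =>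
    is_const_of_fderiv_eq_zero (𝕜 := ℝ)
      (fun y => (hu.pd j).differentiableAt_of_smooth y)
      (fun y => fderiv_eq_zero_of_pd fun i => pd_pd_eq_zero hu hshr i j y) x 0
  have hdiv := sum_pd_normGrad hshr x
  simp only [pd_normGrad hu, pd_pd_eq_zero hu hshr, mul_zero, Finset.sum_const_zero,
    sub_zero] at hdiv
  have hT : tangentHeight u x = 0 := by
    have h : tangentHeight u x * (aEl u x)⁻¹ = 0 := by linarith
    exact (mul_eq_zero.1 h).resolve_right (inv_ne_zero (aEl_pos u x).ne')
  rw [tangentHeight, sub_eq_zero] at hT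
  rw [hT, PiLp.inner_apply]
  simp [gradient_apply, hgrad]
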